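/- Let n ≥ 1, let Φ: ℝⁿ → ℝ be a symmetric gauge function, let A ∈ ℂ^{n×n} be positive-imaginary (i.e., sectorial with all canonical phases in [0,π)), and let 0 ≤ r ≤ n. Then the minimum of Φ(φ₁(E⁻¹AE⁻¹),…,φₙ(E⁻¹AE⁻¹)) over all sectorial matrices E ∈ ℂ^{n×n} such that prank(E) ≤ r and E⁻¹AE⁻¹ is positive-imaginary equals Φ(0,…,0,φ_{r+1}(A),…,φₙ(A)), and this minimum is attained at every Ê ∈ S_p(A,r). -/

import Mathlib

noncomputable section

open Matrix
open scoped Classical ComplexOrder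

namespace LowPrank

variable {n : ℕ}

/-- A matrix is sectorial if its numerical range does not contain `0`
(`star x ⬝ᵥ x = 1` encodes `‖x‖₂ = 1`). -/
def IsSectorial (A : Matrix (Fin n) (Fin n) ℂ) : Prop :=
  ∀ x : Fin n → ℂ, star x ⬝ᵥ x = 1 → star x ⬝ᵥ A.mulVec x ≠ 0

/-- The diagonal unitary matrix `diag (e^{iφ₁}, …, e^{iφₙ})`. -/
def phaseDiag (φ : Fin n → ℝ) : Matrix (Fin n) (Fin n) ℂ :=
  Matrix.diagonal fun k => Complex.exp (Complex.I * (φ k : ℂ))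

/-- `A = Tᴴ diag (e^{iφ₁}, …, e^{iφₙ}) T` with `T` invertible. -/
def IsSectorialDecomp (A T : Matrix (Fin n) (Fin n) ℂ) (φ : Fin n → ℝ) : Prop :=
  IsUnit T ∧ A = Tᴴ * phaseDiag φ * T

/-- `φ` is the (sorted, normalized) vector of canonical phases of `A`:
nonincreasing, spread `< π`, midpoint of the range in `(-π, π]`, and realizing a
sectorial decomposition of `A`. -/
def IsCanonicalPhases (A : Matrix (Fin n) (Fin n) ℂ) (φ : Fin n → ℝ) : Prop :=
  Antitone φ ∧ (∀ i j, φ i - φ j < Real.pi) ∧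
    (-Real.pi < ((⨆ i, φ i) + ⨅ i, φ i) / 2) ∧ (((⨆ i, φ i) + ⨅ i, φ i) / 2 ≤ Real.pi) ∧
    ∃ T, IsSectorialDecomp A T φ

/-- The canonical phases `φ₁(A) ≥ ⋯ ≥ φₙ(A)` of a sectorial matrix
(`phases A k` is the `(k+1)`-st largest canonical phase). -/
noncomputable def phases (A : Matrix (Fin n) (Fin n) ℂ) : Fin n → ℝ :=
  if h : ∃ φ, IsCanonicalPhases A φ then h.choose else 0

/-- The phase-rank: the number of nonzero canonical phases. -/
noncomputable def prank (A : Matrix (Fin n) (Fin n) ℂ) : ℕ :=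
  {k : Fin n | phases A k ≠ 0}.ncard

/-- Positive-imaginary: sectorial with all canonical phases in `[0, π)`. -/
def PositiveImaginary (A : Matrix (Fin n) (Fin n) ℂ) : Prop :=
  IsSectorial A ∧ ∀ k, phases A k ∈ Set.Ico 0 Real.pi

/-- Symmetric gauge function. -/
structure IsSymmetricGauge (Φ : (Fin n → ℝ) → ℝ) : Prop where
  pos : ∀ x, x ≠ 0 → 0 < Φ x
  smul : ∀ (ρ : ℝ) (x), Φ (ρ • x) = |ρ| * Φ x
  subadd : ∀ x y, Φ (x + y) ≤ Φ x + Φ y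
  perm : ∀ (σ : Equiv.Perm (Fin n)) (x), Φ (x ∘ σ) = Φ x
  abs : ∀ x, Φ (fun k => |x k|) = Φ x

/-- The set `S_p(A, r)` of `r`-half-truncations of `A`. -/
def Sp (A : Matrix (Fin n) (Fin n) ℂ) (r : ℕ) : Set (Matrix (Fin n) (Fin n) ℂ) :=
  {E | ∃ T, IsSectorialDecomp A T (phases A) ∧
    E = Tᴴ * Matrix.diagonal (fun k : Fin n =>
      if (k : ℕ) < r then Complex.exp (Complex.I * ((phases A k / 2 : ℝ) : ℂ)) else 1) * T}

/-!
By the Toeplitz–Hausdorff theorem the numerical range of a sectorial matrix can be strictly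
separated from `0`, so a rotation of the matrix has positive definite imaginary part, and
simultaneous diagonalization with its real part gives a sectorial decomposition. The sign of the
imaginary part of the rotated quadratic form then plays the role of the Courant–Fischer principle:
if the forms of two matrices agree on a subspace of codimension `r`, their phases interlace with
shift `r`. In particular canonical phases are unique.

For `A = E * C * E`, the forms of `A` and of `E * C * Eᴴ` agree on `ker (E - Eᴴ)`, whose codimension
is at most the phase-rank of `E`, and `C` and `E * C * Eᴴ` have the same phases. Hence
`φ_{k+r}(A) ≤ φ_k(C)` for all `k`, and the bound follows because a symmetric gauge function is
monotone on nonnegative vectors. A half-truncation `E` of `A` turns all of these inequalities into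
equalities.
-/

/-- The numerical range of a linear operator `T` on a complex inner product space. -/
def numericalRange {E : Type*} [NormedAddCommGroup E] [InnerProductSpace ℂ E] (T : E →ₗ[ℂ] E) :
    Set ℂ :=
  (fun x => inner ℂ x (T x)) '' Metric.sphere 0 1

section NumericalRange

variable {E : Type*} [NormedAddCommGroup E] [InnerProductSpace ℂ E]

lemma inner_smul_map_smul_self (T : E →ₗ[ℂ] E) (c : ℂ) (x : E) :
    inner ℂ (c • x) (T (c • x)) = (‖c‖ : ℂ) ^ 2 * inner ℂ x (T x) := by
  rw [map_smul, inner_smul_left, inner_smul_right, ← mul_assoc, Complex.conj_mul']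

lemma inner_map_self_div_sq_norm_mem_numericalRange (T : E →ₗ[ℂ] E) {x : E} (hx : x ≠ 0) :
    inner ℂ x (T x) / (‖x‖ : ℂ) ^ 2 ∈ numericalRange T := by
  refine ⟨(‖x‖⁻¹ : ℂ) • x, by simp [norm_smul, hx], ?_⟩
  simp only [inner_smul_map_smul_self, norm_inv, Complex.norm_real, norm_norm, Complex.ofReal_inv,
    inv_pow]
  rw [inv_mul_eq_div]

lemma isCompact_numericalRange [FiniteDimensional ℂ E] (T : E →ₗ[ℂ] E) :
    IsCompact (numericalRange T) := by
  have := FiniteDimensional.proper ℂ E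
  have hT : Continuous T := T.continuous_of_finiteDimensional
  exact (isCompact_sphere 0 1).image (by fun_prop)

lemma exists_norm_eq_one_add_star_mul_eq_ofReal (p q : ℂ) :
    ∃ u : ℂ, ‖u‖ = 1 ∧ ∃ g : ℝ, u * p + star u * q = g := by
  refine ⟨Complex.exp ((-(p - star q).arg : ℝ) * Complex.I), Complex.norm_exp_ofReal_mul_I _,
    Complex.conj_eq_iff_real.1 ?_⟩
  set u := Complex.exp ((-(p - star q).arg : ℝ) * Complex.I)
  have hreal : u * (p - star q) = ‖p - star q‖ := by
    conv_lhs => rw [← Complex.norm_mul_exp_arg_mul_I (p - star q), mul_left_comm,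
      ← Complex.exp_add]
    simp
  have hconj := congrArg (starRingEnd ℂ) hreal
  simp only [RCLike.star_def, map_mul, map_sub, map_add, Complex.conj_conj,
    Complex.conj_ofReal] at hreal hconj ⊢
  linear_combination hconj - hreal

/-- A suitable unimodular multiple `u • y` makes the cross terms real, so that the form is real
along the segment from `x` to `u • y` and the intermediate value theorem applies. -/
lemma ofReal_mem_numericalRange {T : E →ₗ[ℂ] E} {x y : E} (hx : ‖x‖ = 1) (hy : ‖y‖ = 1)
    (hx0 : inner ℂ x (T x) = 0) (hy1 : inner ℂ y (T y) = 1) {b : ℝ} (hb : b ∈ Set.Icc 0 1) :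
    (b : ℂ) ∈ numericalRange T := by
  obtain ⟨u, hu, g, hg⟩ :=
    exists_norm_eq_one_add_star_mul_eq_ofReal (inner ℂ x (T y)) (inner ℂ y (T x))
  let p : ℝ → E := fun t => ((1 - t : ℝ) : ℂ) • x + ((t : ℝ) : ℂ) • u • y
  have hform (t : ℝ) : inner ℂ (p t) (T (p t)) = (t ^ 2 + (1 - t) * t * g : ℝ) := by
    have huu : star u * u = 1 := by simp [Complex.conj_mul', hu]
    simp only [p, map_add, map_smul, inner_add_left, inner_add_right, inner_smul_left,
      inner_smul_right, hx0, hy1, Complex.conj_ofReal]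
    push_cast
    rw [← hg]
    simp only [RCLike.star_def] at huu ⊢
    linear_combination (t : ℂ) ^ 2 * huu
  have hcont : ContinuousOn (fun t : ℝ => t ^ 2 + (1 - t) * t * g - b * ‖p t‖ ^ 2)
      (Set.Icc 0 1) := by fun_prop
  obtain ⟨t, -, ht⟩ := intermediate_value_Icc zero_le_one hcont
    (show (0 : ℝ) ∈ Set.Icc _ _ by simpa [p, norm_smul, hx, hy, hu] using hb)
  have hp : p t ≠ 0 := by
    intro h0
    have hxy : ((1 - t : ℝ) : ℂ) • x = (-(t * u) : ℂ) • y := by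
      rw [neg_smul, mul_smul]
      exact eq_neg_of_add_eq_zero_left h0
    have hform0 := congrArg (fun z => inner ℂ z (T z)) hxy
    simp only [inner_smul_map_smul_self, hx0, hy1] at hform0
    have ht0 : t = 0 := by simpa [hu] using hform0.symm
    simp [ht0, p] at h0
    simp [h0] at hx
  have hp2 : (‖p t‖ : ℂ) ^ 2 ≠ 0 := by simpa using hp
  convert inner_map_self_div_sq_norm_mem_numericalRange T hp
  rw [hform, eq_div_iff hp2]
  exact_mod_cast (sub_eq_zero.1 ht).symm

theorem convex_numericalRange (T : E →ₗ[ℂ] E) : Convex ℝ (numericalRange T) := by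
  rw [convex_iff_segment_subset]
  rintro _ ⟨x, hx, rfl⟩ _ ⟨y, hy, rfl⟩ z hz
  rw [mem_sphere_zero_iff_norm] at hx hy
  rw [segment_eq_image'] at hz
  obtain ⟨b, hb, rfl⟩ := hz
  set a := inner ℂ x (T x)
  set w := inner ℂ y (T y) - a
  by_cases hw : w = 0
  · exact ⟨x, by simpa using hx, by simp [hw]⟩
  have hT' (v : E) (hv : ‖v‖ = 1) :
      inner ℂ v ((w⁻¹ • (T - a • LinearMap.id) : E →ₗ[ℂ] E) v) = w⁻¹ * (inner ℂ v (T v) - a) := by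
    simp [inner_self_eq_norm_sq_to_K, hv]
  obtain ⟨v, hv, hvb⟩ := ofReal_mem_numericalRange hx hy
    (by rw [hT' x hx, sub_self, mul_zero]) (by rw [hT' y hy, inv_mul_cancel₀ hw]) hb
  refine ⟨v, hv, ?_⟩
  beta_reduce at hvb ⊢
  rw [hT' v (mem_sphere_zero_iff_norm.1 hv), inv_mul_eq_iff_eq_mul₀ hw] at hvb
  rw [Complex.real_smul]
  linear_combination hvb

lemma exists_forall_im_exp_mul_pos (w : ℂ) :
    ∃ θ : ℝ, ∀ z : ℂ, 0 < (w * z).re → 0 < (Complex.exp (-(Complex.I * θ)) * z).im := by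
  refine ⟨-(Complex.I * w).arg, fun z hz => ?_⟩
  have hre : (w * z).re = (Complex.I * w * z).im := by rw [mul_assoc, Complex.I_mul_im]
  rw [hre, ← Complex.norm_mul_exp_arg_mul_I (Complex.I * w), mul_assoc, Complex.im_ofReal_mul]
    at hz
  rw [Complex.ofReal_neg, mul_neg, neg_neg, mul_comm Complex.I]
  exact pos_of_mul_pos_right hz (norm_nonneg _)

lemma exists_forall_im_exp_mul_inner_map_self_pos [FiniteDimensional ℂ E] {T : E →ₗ[ℂ] E}
    (hT : 0 ∉ numericalRange T) :
    ∃ θ : ℝ, ∀ x, x ≠ 0 → 0 < (Complex.exp (-(Complex.I * θ)) * inner ℂ x (T x)).im := by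
  obtain ⟨f, s, hs, hf⟩ := RCLike.geometric_hahn_banach_point_closed (𝕜 := ℂ)
    (convex_numericalRange T) (isCompact_numericalRange T).isClosed hT
  obtain ⟨θ, hθ⟩ := exists_forall_im_exp_mul_pos (f 1)
  refine ⟨θ, fun x hx => ?_⟩
  set z := inner ℂ x (T x) / (‖x‖ : ℂ) ^ 2 with hz
  have hfz : f z = f 1 * z := by rw [mul_comm, ← smul_eq_mul z, ← map_smul, smul_eq_mul, mul_one]
  have hfpos : 0 < (f z).re := by
    simpa using hs.trans (hf z (inner_map_self_div_sq_norm_mem_numericalRange T hx))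
  have hzx : inner ℂ x (T x) = ((‖x‖ ^ 2 : ℝ) : ℂ) * z := by
    rw [hz]
    push_cast
    rw [mul_div_cancel₀]
    simpa using hx
  rw [hzx, mul_left_comm, Complex.im_ofReal_mul]
  exact mul_pos (by positivity) (hθ z (hfz ▸ hfpos))

end NumericalRange

/-- The quadratic form `x ↦ xᴴ A x` of a square matrix `A`. -/
def quadForm {ι : Type*} [Fintype ι] (A : Matrix ι ι ℂ) (x : ι → ℂ) : ℂ :=
  star x ⬝ᵥ A *ᵥ x

section QuadForm

variable {ι : Type*} [Fintype ι]

lemma quadForm_smul (c : ℂ) (A : Matrix ι ι ℂ) (x : ι → ℂ) :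
    quadForm (c • A) x = c * quadForm A x := by
  rw [quadForm, smul_mulVec, dotProduct_smul, smul_eq_mul, quadForm]

lemma quadForm_mul_mul (B A C : Matrix ι ι ℂ) (x : ι → ℂ) :
    quadForm (B * A * C) x = star (Bᴴ *ᵥ x) ⬝ᵥ A *ᵥ (C *ᵥ x) := by
  rw [quadForm, star_mulVec, conjTranspose_conjTranspose, ← dotProduct_mulVec, mulVec_mulVec,
    mulVec_mulVec, Matrix.mul_assoc]

lemma quadForm_diagonal [DecidableEq ι] (d x : ι → ℂ) :
    quadForm (diagonal d) x = ∑ j, d j * Complex.normSq (x j) := by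
  refine Finset.sum_congr rfl fun j _ => ?_
  rw [mulVec_diagonal, Complex.normSq_eq_conj_mul_self, Pi.star_apply, RCLike.star_def,
    mul_left_comm]

lemma inner_toEuclideanLin_self [DecidableEq ι] (A : Matrix ι ι ℂ) (x : EuclideanSpace ℂ ι) :
    inner ℂ x (A.toEuclideanLin x) = quadForm A x.ofLp := by
  rw [EuclideanSpace.inner_eq_star_dotProduct, dotProduct_comm]
  rfl

end QuadForm

lemma IsSectorial.zero_notMem_numericalRange {A : Matrix (Fin n) (Fin n) ℂ} (hA : IsSectorial A) :
    0 ∉ numericalRange A.toEuclideanLin := by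
  rintro ⟨x, hx, hx0⟩
  refine hA x.ofLp ?_ ((inner_toEuclideanLin_self A x).symm.trans hx0)
  rw [dotProduct_comm, ← EuclideanSpace.inner_eq_star_dotProduct, inner_self_eq_norm_sq_to_K,
    mem_sphere_zero_iff_norm.1 hx]
  simp

namespace IsSectorialDecomp

variable {A T : Matrix (Fin n) (Fin n) ℂ} {φ : Fin n → ℝ} {c : ℝ} {x : Fin n → ℂ}

lemma im_exp_mul_quadForm (h : IsSectorialDecomp A T φ) (c : ℝ) (x : Fin n → ℂ) :
    (Complex.exp (-(Complex.I * c)) * quadForm A x).im =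
      ∑ j, Real.sin (φ j - c) * Complex.normSq ((T *ᵥ x) j) := by
  rw [h.2, quadForm_mul_mul, conjTranspose_conjTranspose, phaseDiag, ← quadForm,
    quadForm_diagonal, Finset.mul_sum, Complex.im_sum]
  refine Finset.sum_congr rfl fun j _ => ?_
  rw [← mul_assoc, ← Complex.exp_add, Complex.im_mul_ofReal]
  congr 1
  rw [← Complex.exp_ofReal_mul_I_im]
  congr 2
  push_cast
  ring

lemma mulVec_ne_zero (h : IsSectorialDecomp A T φ) (hx : x ≠ 0) : T *ᵥ x ≠ 0 := by
  rw [← mulVec_zero T]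
  exact (mulVec_injective_of_isUnit h.1).ne hx

lemma im_exp_mul_quadForm_pos (h : IsSectorialDecomp A T φ) (hx : x ≠ 0)
    (hφ : ∀ j, (T *ᵥ x) j ≠ 0 → φ j ∈ Set.Ioo c (c + Real.pi)) :
    0 < (Complex.exp (-(Complex.I * c)) * quadForm A x).im := by
  have hterm (j) (hj : (T *ᵥ x) j ≠ 0) :
      0 < Real.sin (φ j - c) * Complex.normSq ((T *ᵥ x) j) :=
    mul_pos (Real.sin_pos_of_pos_of_lt_pi (sub_pos.2 (hφ j hj).1) (by linarith [(hφ j hj).2]))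
      (Complex.normSq_pos.2 hj)
  rw [h.im_exp_mul_quadForm]
  obtain ⟨i, hi⟩ := Function.ne_iff.1 (h.mulVec_ne_zero hx)
  refine Finset.sum_pos' (fun j _ => ?_) ⟨i, Finset.mem_univ i, hterm i hi⟩
  by_cases hj : (T *ᵥ x) j = 0
  · simp [hj]
  · exact (hterm j hj).le

lemma im_exp_mul_quadForm_nonpos (h : IsSectorialDecomp A T φ)
    (hφ : ∀ j, (T *ᵥ x) j ≠ 0 → φ j ∈ Set.Icc (c - Real.pi) c) :
    (Complex.exp (-(Complex.I * c)) * quadForm A x).im ≤ 0 := by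
  rw [h.im_exp_mul_quadForm]
  refine Finset.sum_nonpos fun j _ => ?_
  by_cases hj : (T *ᵥ x) j = 0
  · simp [hj]
  · exact mul_nonpos_of_nonpos_of_nonneg (Real.sin_nonpos_of_nonpos_of_neg_pi_le
      (sub_nonpos.2 (hφ j hj).2) (by linarith [(hφ j hj).1])) (Complex.normSq_nonneg _)

lemma isSectorial (h : IsSectorialDecomp A T φ) (hφ : ∀ j, φ j ∈ Set.Ioo c (c + Real.pi)) :
    IsSectorial A := by
  intro x hx h0
  have hx0 : x ≠ 0 := by
    rintro rfl
    simp at hx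
  have hpos := h.im_exp_mul_quadForm_pos hx0 fun j _ => hφ j
  rw [quadForm, h0, mul_zero] at hpos
  exact hpos.false

lemma isUnit (h : IsSectorialDecomp A T φ) : IsUnit A := by
  rw [h.2]
  refine (IsUnit.mul h.1.star ?_).mul h.1
  exact isUnit_diagonal.2 (Pi.isUnit_iff.2 fun j => (Complex.exp_ne_zero _).isUnit)

end IsSectorialDecomp

section Diagonalization

variable {ι : Type*} [Fintype ι]

lemma quadForm_imaginaryPart (A : Matrix ι ι ℂ) (x : ι → ℂ) :
    quadForm (imaginaryPart A : Matrix ι ι ℂ) x = (quadForm A x).im := by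
  have hstar : star x ⬝ᵥ star A *ᵥ x = star (quadForm A x) := by
    rw [star_eq_conjTranspose, star_dotProduct, star_mulVec, conjTranspose_conjTranspose,
      ← dotProduct_mulVec, quadForm]
  rw [imaginaryPart_apply_coe, quadForm_smul, quadForm, smul_mulVec, sub_mulVec, dotProduct_smul,
    dotProduct_sub, hstar, ← quadForm]
  apply Complex.ext <;> simp
  ring

lemma posDef_imaginaryPart {A : Matrix ι ι ℂ} (hA : ∀ x, x ≠ 0 → 0 < (quadForm A x).im) :
    (imaginaryPart A : Matrix ι ι ℂ).PosDef := by
  refine posDef_iff_dotProduct_mulVec.2 ⟨(imaginaryPart A).2, fun x hx => ?_⟩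
  rw [← quadForm, quadForm_imaginaryPart]
  exact_mod_cast hA x hx

open scoped MatrixOrder in
lemma exists_simultaneous_diagonalization [DecidableEq ι] {H K : Matrix ι ι ℂ} (hH : H.PosDef)
    (hK : K.IsHermitian) : ∃ (W : Matrix ι ι ℂ) (d : ι → ℝ),
      IsUnit W ∧ H = Wᴴ * W ∧ K = Wᴴ * diagonal (fun j => (d j : ℂ)) * W := by
  obtain ⟨S, hS, rfl⟩ :=
    CStarAlgebra.isStrictlyPositive_iff_eq_star_mul_self.1 hH.isStrictlyPositive
  have hSS : S⁻¹ * S = 1 := nonsing_inv_mul S ((isUnit_iff_isUnit_det S).1 hS)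
  have hL : (S⁻¹ᴴ * K * S⁻¹).IsHermitian := isHermitian_conjTranspose_mul_mul _ hK
  let U : Matrix ι ι ℂ := hL.eigenvectorUnitary
  have hU : U * Uᴴ = 1 := Unitary.coe_mul_star_self hL.eigenvectorUnitary
  have hspec : S⁻¹ᴴ * K * S⁻¹ = U * diagonal (fun j => (hL.eigenvalues j : ℂ)) * Uᴴ :=
    hL.spectral_theorem.trans (Unitary.conjStarAlgAut_apply ..)
  refine ⟨Uᴴ * S, hL.eigenvalues, (IsUnit.of_mul_eq_one _ hU).star.mul hS, ?_, ?_⟩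
  · rw [conjTranspose_mul, conjTranspose_conjTranspose, Matrix.mul_assoc, ← Matrix.mul_assoc U, hU,
      Matrix.one_mul, star_eq_conjTranspose]
  · calc K = (S⁻¹ * S)ᴴ * K * (S⁻¹ * S) := by simp only [hSS, conjTranspose_one, one_mul, mul_one]
      _ = Sᴴ * (S⁻¹ᴴ * K * S⁻¹) * S := by simp only [conjTranspose_mul, Matrix.mul_assoc]
      _ = Sᴴ * (U * diagonal (fun j => (hL.eigenvalues j : ℂ)) * Uᴴ) * S :=
        congrArg (fun M => Sᴴ * M * S) hspec
      _ = _ := by simp only [conjTranspose_mul, conjTranspose_conjTranspose, Matrix.mul_assoc]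

lemma exists_eq_diagonal_add_I_of_im_pos [DecidableEq ι] {A : Matrix ι ι ℂ}
    (hA : ∀ x, x ≠ 0 → 0 < (quadForm A x).im) : ∃ (W : Matrix ι ι ℂ) (d : ι → ℝ),
      IsUnit W ∧ A = Wᴴ * diagonal (fun j => d j + Complex.I) * W := by
  obtain ⟨W, d, hW, hIm, hRe⟩ := exists_simultaneous_diagonalization (posDef_imaginaryPart hA)
    (realPart A).2
  refine ⟨W, d, hW, ?_⟩
  have hdiag : diagonal (fun j => d j + Complex.I) =
      diagonal (fun j => (d j : ℂ)) + Complex.I • 1 := by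
    rw [← diagonal_one, ← diagonal_smul, diagonal_add]
    simp
  rw [← realPart_add_I_smul_imaginaryPart A, hRe, hIm, hdiag, Matrix.mul_add, Matrix.add_mul,
    Matrix.mul_smul, Matrix.mul_one, Matrix.smul_mul]

end Diagonalization

lemma isSectorialDecomp_of_diagonal {W : Matrix (Fin n) (Fin n) ℂ} (hW : IsUnit W)
    {ρ : Fin n → ℝ} (hρ : ∀ j, 0 < ρ j) (φ : Fin n → ℝ) :
    IsSectorialDecomp (Wᴴ * diagonal (fun j => ρ j * Complex.exp (Complex.I * φ j)) * W)
      (diagonal (fun j => (√(ρ j) : ℂ)) * W) φ := by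
  refine ⟨(isUnit_diagonal.2 (Pi.isUnit_iff.2 fun j => ?_)).mul hW, ?_⟩
  · simpa using (Real.sqrt_pos.2 (hρ j)).ne'
  · have hdiag : diagonal (fun j => ρ j * Complex.exp (Complex.I * φ j)) =
        (diagonal fun j => (√(ρ j) : ℂ))ᴴ * phaseDiag φ * diagonal fun j => (√(ρ j) : ℂ) := by
      rw [phaseDiag, diagonal_conjTranspose, diagonal_mul_diagonal, diagonal_mul_diagonal]
      congr 1
      ext j
      rw [Pi.star_apply, RCLike.star_def, Complex.conj_ofReal, mul_right_comm,
        ← Complex.ofReal_mul, Real.mul_self_sqrt (hρ j).le]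
    rw [hdiag, conjTranspose_mul]
    simp only [Matrix.mul_assoc]

lemma arg_mem_Ioo_of_im_pos {z : ℂ} (hz : 0 < z.im) : z.arg ∈ Set.Ioo 0 Real.pi := by
  refine ⟨(Complex.arg_nonneg_iff.2 hz.le).lt_of_ne' fun h => ?_,
    Complex.arg_lt_pi_iff.2 (Or.inr hz.ne')⟩
  exact hz.ne' (Complex.arg_eq_zero_iff.1 h).2

/-- By convexity of the numerical range, some rotation of `A` has positive definite imaginary part,
which can be diagonalized simultaneously with the real part. -/
lemma IsSectorial.exists_decomp {A : Matrix (Fin n) (Fin n) ℂ} (hA : IsSectorial A) :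
    ∃ c T φ, IsSectorialDecomp A T φ ∧ ∀ j, φ j ∈ Set.Ioo c (c + Real.pi) := by
  obtain ⟨c, hc⟩ := exists_forall_im_exp_mul_inner_map_self_pos hA.zero_notMem_numericalRange
  obtain ⟨W, d, hW, hd⟩ := exists_eq_diagonal_add_I_of_im_pos
    (A := Complex.exp (-(Complex.I * c)) • A) fun x hx => by
      rw [quadForm_smul, ← inner_toEuclideanLin_self A (WithLp.toLp 2 x)]
      exact hc _ (by simpa using hx)
  let z : Fin n → ℂ := fun j => d j + Complex.I
  have hz (j) : 0 < (z j).im := by simp [z]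
  have hz0 (j) : 0 < ‖z j‖ := norm_pos_iff.2 fun h => by simpa [h] using hz j
  have hAz : A = Wᴴ * diagonal (fun j =>
      ‖z j‖ * Complex.exp (Complex.I * (c + (z j).arg : ℝ))) * W := by
    calc A = Complex.exp (Complex.I * c) • Complex.exp (-(Complex.I * c)) • A := by
          rw [smul_smul, ← Complex.exp_add, add_neg_cancel, Complex.exp_zero, one_smul]
      _ = Wᴴ * diagonal (Complex.exp (Complex.I * c) • z) * W := by
          rw [hd, diagonal_smul, Matrix.mul_smul, Matrix.smul_mul]
      _ = _ := by
          congr 3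
          ext j
          rw [Complex.ofReal_add, mul_add, Complex.exp_add, mul_left_comm,
            mul_comm _ ((z j).arg : ℂ), Complex.norm_mul_exp_arg_mul_I, Pi.smul_apply, smul_eq_mul]
  refine ⟨c, _, _, hAz ▸ isSectorialDecomp_of_diagonal hW hz0 _, fun j => ?_⟩
  have harg := arg_mem_Ioo_of_im_pos (hz j)
  exact ⟨lt_add_of_pos_right c harg.1, add_lt_add_right harg.2 c⟩

lemma exists_mem_ne_zero_mulVec_eq_zero {ι : Type*} [Fintype ι] {V : Submodule ℂ (ι → ℂ)}
    (S T : Matrix ι ι ℂ) {s t : Finset ι} (h : s.card + t.card < Module.finrank ℂ V) :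
    ∃ x ∈ V, x ≠ 0 ∧ (∀ j ∈ s, (S *ᵥ x) j = 0) ∧ ∀ j ∈ t, (T *ᵥ x) j = 0 := by
  let restrict (u : Finset ι) (M : Matrix ι ι ℂ) : (ι → ℂ) →ₗ[ℂ] u → ℂ :=
    LinearMap.funLeft ℂ ℂ Subtype.val ∘ₗ M.mulVecLin
  let f := (restrict s S).prod (restrict t T) ∘ₗ V.subtype
  have hf : Module.finrank ℂ ((s → ℂ) × (t → ℂ)) < Module.finrank ℂ V := by simpa using h
  obtain ⟨x, hx, hx0⟩ := (Submodule.ne_bot_iff _).1 (LinearMap.ker_ne_bot_of_finrank_lt (f := f) hf)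
  obtain ⟨hS, hT⟩ := Prod.ext_iff.1 (LinearMap.mem_ker.1 hx)
  exact ⟨x, x.2, by simpa using hx0, fun j hj => congrFun hS ⟨j, hj⟩,
    fun j hj => congrFun hT ⟨j, hj⟩⟩

/-- If `φ l > ψ k`, the form of `A`, rotated by `ψ k`, is positive wherever the coordinates after
`l` vanish and the form of `B` is nonpositive wherever those before `k` vanish; these two conditions
leave a nonzero vector of `V`. -/
lemma IsSectorialDecomp.le_of_quadForm_eqOn {A B S T : Matrix (Fin n) (Fin n) ℂ}
    {φ ψ : Fin n → ℝ} (hA : IsSectorialDecomp A S φ) (hB : IsSectorialDecomp B T ψ)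
    (hφ : Antitone φ) (hψ : Antitone ψ) (hφψ : ∀ i j, φ i - ψ j < Real.pi)
    (hψψ : ∀ i j, ψ i - ψ j < Real.pi) {V : Submodule ℂ (Fin n → ℂ)}
    (hAB : ∀ x ∈ V, quadForm A x = quadForm B x) {r : ℕ} (hV : n ≤ Module.finrank ℂ V + r)
    {k l : Fin n} (hkl : (l : ℕ) = k + r) : φ l ≤ ψ k := by
  obtain ⟨x, hxV, hx0, hS, hT⟩ := exists_mem_ne_zero_mulVec_eq_zero (V := V) S T
    (s := Finset.Ioi l) (t := Finset.Iio k) (by rw [Fin.card_Ioi, Fin.card_Iio]; lia)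
  by_contra! hlt
  have hpos := hA.im_exp_mul_quadForm_pos (c := ψ k) hx0 fun j hj => by
    have hjl : j ≤ l := not_lt.1 fun hlj => hj (hS j (Finset.mem_Ioi.2 hlj))
    exact ⟨hlt.trans_le (hφ hjl), sub_lt_iff_lt_add'.1 (hφψ j k)⟩
  have hnonpos := hB.im_exp_mul_quadForm_nonpos (c := ψ k) (x := x) fun j hj => by
    have hkj : k ≤ j := not_lt.1 fun hjk => hj (hT j (Finset.mem_Iio.2 hjk))
    exact ⟨sub_le_comm.1 (hψψ k j).le, hψ hkj⟩
  rw [← hAB x hxV] at hnonpos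
  exact hpos.not_ge hnonpos

section CanonicalPhases

/-- The midpoint `(max φ + min φ) / 2` of the range of `φ`, with value `0` for `n = 0`. -/
def phaseCenter (φ : Fin n → ℝ) : ℝ :=
  ((⨆ i, φ i) + ⨅ i, φ i) / 2

variable {A S T : Matrix (Fin n) (Fin n) ℂ} {φ ψ : Fin n → ℝ} {c d : ℝ}

lemma phaseCenter_of_isEmpty [IsEmpty (Fin n)] (φ : Fin n → ℝ) : phaseCenter φ = 0 := by
  simp [phaseCenter]

lemma phaseCenter_sub_const [Nonempty (Fin n)] (φ : Fin n → ℝ) (a : ℝ) :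
    phaseCenter (fun j => φ j - a) = phaseCenter φ - a := by
  rw [phaseCenter, phaseCenter, ← ciSup_sub (Set.finite_range φ).bddAbove,
    ← ciInf_sub (Set.finite_range φ).bddBelow]
  ring

lemma phaseCenter_mem_Icc [Nonempty (Fin n)] (hφ : ∀ j, φ j ∈ Set.Icc c d) :
    phaseCenter φ ∈ Set.Icc c d := by
  obtain ⟨imax, hmax⟩ := exists_eq_ciSup_of_finite (f := φ)
  obtain ⟨imin, hmin⟩ := exists_eq_ciInf_of_finite (f := φ)
  rw [phaseCenter, ← hmax, ← hmin]
  constructor <;> linarith [(hφ imax).1, (hφ imax).2, (hφ imin).1, (hφ imin).2]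

lemma mem_Ioo_phaseCenter (hφ : ∀ i j, φ i - φ j < Real.pi) (j : Fin n) :
    φ j ∈ Set.Ioo (phaseCenter φ - Real.pi / 2) (phaseCenter φ - Real.pi / 2 + Real.pi) := by
  have : Nonempty (Fin n) := ⟨j⟩
  obtain ⟨imax, hmax⟩ := exists_eq_ciSup_of_finite (f := φ)
  obtain ⟨imin, hmin⟩ := exists_eq_ciInf_of_finite (f := φ)
  have hle := le_ciSup (Set.finite_range φ).bddAbove j
  have hge := ciInf_le (Set.finite_range φ).bddBelow j
  have hspread := hφ imax imin
  rw [hmax, hmin] at hspread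
  rw [phaseCenter]
  constructor <;> linarith

lemma isCanonicalPhases_iff : IsCanonicalPhases A φ ↔ Antitone φ ∧ (∀ i j, φ i - φ j < Real.pi) ∧
    phaseCenter φ ∈ Set.Ioc (-Real.pi) Real.pi ∧ ∃ T, IsSectorialDecomp A T φ := by
  rw [IsCanonicalPhases, ← phaseCenter, Set.mem_Ioc, and_assoc]

lemma existsUnique_sub_zsmul_two_pi_mem_Ioc (x : ℝ) :
    ∃! m : ℤ, x - m • (2 * Real.pi) ∈ Set.Ioc (-Real.pi) Real.pi := by
  have hIoc : -Real.pi + 2 * Real.pi = Real.pi := by ring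
  simpa only [hIoc] using existsUnique_sub_zsmul_mem_Ioc Real.two_pi_pos x (-Real.pi)

lemma mem_Ioo_zero_pi_of_sin_pos {x : ℝ} (hx : x ∈ Set.Ioo (-Real.pi) (2 * Real.pi))
    (h : 0 < Real.sin x) : x ∈ Set.Ioo 0 Real.pi := by
  constructor
  · by_contra! hx0
    exact h.not_ge (Real.sin_nonpos_of_nonpos_of_neg_pi_le hx0 hx.1.le)
  · by_contra! hxpi
    have hsub := Real.sin_nonneg_of_nonneg_of_le_pi (sub_nonneg.2 hxpi) (by linarith [hx.2])
    rw [Real.sin_sub_pi] at hsub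
    linarith

namespace IsSectorialDecomp

lemma comp_perm (h : IsSectorialDecomp A T φ) (σ : Equiv.Perm (Fin n)) :
    IsSectorialDecomp A (T.submatrix σ (Equiv.refl _)) (φ ∘ σ) := by
  refine ⟨(isUnit_submatrix_equiv σ (Equiv.refl _)).2 h.1, ?_⟩
  have hdiag : phaseDiag (φ ∘ σ) = (phaseDiag φ).submatrix σ σ :=
    (submatrix_diagonal_equiv (fun k => Complex.exp (Complex.I * φ k)) σ).symm
  rw [hdiag, conjTranspose_submatrix, submatrix_mul_equiv, submatrix_mul_equiv, Equiv.coe_refl,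
    submatrix_id_id]
  exact h.2

lemma sub_zsmul_two_pi (h : IsSectorialDecomp A T φ) (m : ℤ) :
    IsSectorialDecomp A T fun j => φ j - m • (2 * Real.pi) := by
  refine ⟨h.1, h.2.trans ?_⟩
  congr 2
  refine congrArg diagonal (funext fun j => ?_)
  refine Complex.exp_eq_exp_iff_exists_int.2 ⟨m, ?_⟩
  push_cast
  ring

lemma le_of_mem_Ioo (hφ : IsSectorialDecomp A S φ) (hψ : IsSectorialDecomp A T ψ)
    (hφ_anti : Antitone φ) (hψ_anti : Antitone ψ)
    (hφ_mem : ∀ j, φ j ∈ Set.Ioo c (c + Real.pi)) (hψ_mem : ∀ j, ψ j ∈ Set.Ioo c (c + Real.pi)) :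
    φ ≤ ψ := by
  have hdiff {x y : ℝ} (hx : x ∈ Set.Ioo c (c + Real.pi)) (hy : y ∈ Set.Ioo c (c + Real.pi)) :
      x - y < Real.pi := by linarith [hx.2, hy.1]
  exact fun k => hφ.le_of_quadForm_eqOn hψ hφ_anti hψ_anti
    (fun i j => hdiff (hφ_mem i) (hψ_mem j)) (fun i j => hdiff (hψ_mem i) (hψ_mem j))
    (V := ⊤) (r := 0) (fun _ _ => rfl) (by simp) rfl

/-- Test the form at the preimages under `T` of the basis vectors. -/
lemma exists_sub_zsmul_mem_Ioo (hφ : IsSectorialDecomp A S φ) (hψ : IsSectorialDecomp A T ψ)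
    (hφ_mem : ∀ j, φ j ∈ Set.Ioo c (c + Real.pi)) (hψ_mem : ∀ j, ψ j ∈ Set.Ioo d (d + Real.pi)) :
    ∃ m : ℤ, ∀ j, ψ j - m • (2 * Real.pi) ∈ Set.Ioo c (c + Real.pi) := by
  obtain ⟨m, hm, -⟩ := existsUnique_sub_zsmul_two_pi_mem_Ioc (d - c)
  have hψm := hψ.sub_zsmul_two_pi m
  refine ⟨m, fun j => ?_⟩
  obtain ⟨x, hx⟩ := mulVec_surjective_iff_isUnit.2 hψ.1 (Pi.single j 1)
  have hx0 : x ≠ 0 := by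
    rintro rfl
    simpa using congrFun hx j
  have hsin := hφ.im_exp_mul_quadForm_pos hx0 fun i _ => hφ_mem i
  rw [hψm.im_exp_mul_quadForm, hx, Finset.sum_eq_single j (by simp +contextual) (by simp),
    Pi.single_eq_same, map_one, mul_one] at hsin
  have hrange : ψ j - m • (2 * Real.pi) - c ∈ Set.Ioo (-Real.pi) (2 * Real.pi) := by
    obtain ⟨hdψ, hψd⟩ := hψ_mem j
    constructor <;> linarith [hm.1, hm.2]
  obtain ⟨hpos, hlt⟩ := mem_Ioo_zero_pi_of_sin_pos hrange hsin
  exact ⟨sub_pos.1 hpos, sub_lt_iff_lt_add'.1 hlt⟩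

end IsSectorialDecomp

lemma IsSectorial.exists_isCanonicalPhases (hA : IsSectorial A) : ∃ φ, IsCanonicalPhases A φ := by
  obtain ⟨c, T, φ, hφ, hmem⟩ := hA.exists_decomp
  rcases isEmpty_or_nonempty (Fin n) with hn | hn
  · refine ⟨φ, isCanonicalPhases_iff.2 ⟨Subsingleton.antitone φ, isEmptyElim, ?_, T, hφ⟩⟩
    simp [phaseCenter_of_isEmpty, Real.pi_pos, Real.pi_nonneg]
  let σ := Tuple.sort (-φ)
  obtain ⟨m, hm, -⟩ := existsUnique_sub_zsmul_two_pi_mem_Ioc (phaseCenter (φ ∘ σ))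
  have hanti : Antitone (φ ∘ σ) := fun i j hij => neg_le_neg_iff.1 (Tuple.monotone_sort (-φ) hij)
  refine ⟨_, isCanonicalPhases_iff.2 ⟨fun i j hij => sub_le_sub_right (hanti hij) _, fun i j => ?_,
    ?_, _, (hφ.comp_perm σ).sub_zsmul_two_pi m⟩⟩
  · have hi := (hmem (σ i)).2
    have hj := (hmem (σ j)).1
    simp only [Function.comp_apply]
    linarith
  · rwa [phaseCenter_sub_const]

lemma IsCanonicalPhases.unique (hφ : IsCanonicalPhases A φ) (hψ : IsCanonicalPhases A ψ) :
    φ = ψ := by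
  rcases isEmpty_or_nonempty (Fin n) with hn | hn
  · exact Subsingleton.elim φ ψ
  obtain ⟨hφ_anti, hφ_spread, hφ_center, S, hS⟩ := isCanonicalPhases_iff.1 hφ
  obtain ⟨hψ_anti, hψ_spread, hψ_center, T, hT⟩ := isCanonicalPhases_iff.1 hψ
  have hφ_mem := mem_Ioo_phaseCenter hφ_spread
  obtain ⟨m, hm⟩ := hS.exists_sub_zsmul_mem_Ioo hT hφ_mem (mem_Ioo_phaseCenter hψ_spread)
  have hψ_anti' : Antitone fun j => ψ j - m • (2 * Real.pi) := fun i j hij =>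
    sub_le_sub_right (hψ_anti hij) _
  have heq : φ = fun j => ψ j - m • (2 * Real.pi) := le_antisymm
    (hS.le_of_mem_Ioo (hT.sub_zsmul_two_pi m) hφ_anti hψ_anti' hφ_mem hm)
    ((hT.sub_zsmul_two_pi m).le_of_mem_Ioo hS hψ_anti' hφ_anti hm hφ_mem)
  rw [heq, phaseCenter_sub_const] at hφ_center
  have hm0 : m = 0 := (existsUnique_sub_zsmul_two_pi_mem_Ioc (phaseCenter ψ)).unique hφ_center
    (by rwa [zero_smul, sub_zero])
  simpa [hm0] using heq

lemma phases_eq (hφ : IsCanonicalPhases A φ) : phases A = φ := by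
  have h : ∃ φ, IsCanonicalPhases A φ := ⟨φ, hφ⟩
  rw [phases, dif_pos h]
  exact h.choose_spec.unique hφ

lemma IsSectorial.isCanonicalPhases_phases (hA : IsSectorial A) :
    IsCanonicalPhases A (phases A) := by
  obtain ⟨φ, hφ⟩ := hA.exists_isCanonicalPhases
  rwa [phases_eq hφ]

lemma IsSectorialDecomp.isCanonicalPhases (h : IsSectorialDecomp A T φ) (hφ_anti : Antitone φ)
    (hφ_mem : ∀ j, φ j ∈ Set.Ico 0 Real.pi) : IsCanonicalPhases A φ := by
  refine isCanonicalPhases_iff.2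
    ⟨hφ_anti, fun i j => by linarith [(hφ_mem i).2, (hφ_mem j).1], ?_, T, h⟩
  rcases isEmpty_or_nonempty (Fin n) with hn | hn
  · simp [phaseCenter_of_isEmpty, Real.pi_pos, Real.pi_nonneg]
  · have hcenter := phaseCenter_mem_Icc fun j => Set.Ico_subset_Icc_self (hφ_mem j)
    exact ⟨(neg_lt_zero.2 Real.pi_pos).trans_le hcenter.1, hcenter.2⟩

lemma IsCanonicalPhases.isSectorial (h : IsCanonicalPhases A φ) : IsSectorial A := by
  obtain ⟨-, hspread, -, T, hT⟩ := isCanonicalPhases_iff.1 h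
  exact hT.isSectorial (mem_Ioo_phaseCenter hspread)

lemma IsCanonicalPhases.positiveImaginary (h : IsCanonicalPhases A φ)
    (hφ_mem : ∀ j, φ j ∈ Set.Ico 0 Real.pi) : PositiveImaginary A :=
  ⟨h.isSectorial, (phases_eq h).symm ▸ hφ_mem⟩

end CanonicalPhases

lemma IsSectorialDecomp.mul_mul_conjTranspose {A T : Matrix (Fin n) (Fin n) ℂ} {φ : Fin n → ℝ}
    (h : IsSectorialDecomp A T φ) {E : Matrix (Fin n) (Fin n) ℂ} (hE : IsUnit E) :
    IsSectorialDecomp (E * A * Eᴴ) (T * Eᴴ) φ := by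
  refine ⟨h.1.mul hE.star, ?_⟩
  rw [h.2, conjTranspose_mul, conjTranspose_conjTranspose]
  simp only [Matrix.mul_assoc]

section PhaseRank

variable {A E : Matrix (Fin n) (Fin n) ℂ}

lemma rank_sub_conjTranspose_le_prank (hE : IsSectorial E) : (E - Eᴴ).rank ≤ prank E := by
  obtain ⟨-, -, -, R, hR⟩ := isCanonicalPhases_iff.1 hE.isCanonicalPhases_phases
  set D := phaseDiag (phases E) with hD
  have hdiag : D - Dᴴ = diagonal fun k =>
      Complex.exp (Complex.I * phases E k) - star (Complex.exp (Complex.I * phases E k)) := by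
    rw [hD, phaseDiag, diagonal_conjTranspose, diagonal_sub]
    rfl
  have hE_sub : E - Eᴴ = Rᴴ * (D - Dᴴ) * R := by
    conv_lhs => rw [hR.2]
    simp only [conjTranspose_mul, conjTranspose_conjTranspose, Matrix.mul_sub, Matrix.sub_mul,
      Matrix.mul_assoc, hD]
  calc (E - Eᴴ).rank ≤ (D - Dᴴ).rank := by
        rw [hE_sub]
        exact (rank_mul_le_left _ _).trans (rank_mul_le_right _ _)
    _ ≤ prank E := by
        rw [hdiag, rank_diagonal, prank, ← Nat.card_coe_set_eq, Nat.card_eq_fintype_card]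
        exact Fintype.card_subtype_mono _ _ fun k => mt fun h0 => by simp [h0]

lemma quadForm_mul_mul_eq_of_mem_ker {x : Fin n → ℂ}
    (hx : x ∈ LinearMap.ker (E - Eᴴ).mulVecLin) :
    quadForm (E * A * E) x = quadForm (E * A * Eᴴ) x := by
  rw [LinearMap.mem_ker, mulVecLin_apply, sub_mulVec, sub_eq_zero] at hx
  rw [quadForm_mul_mul, quadForm_mul_mul, hx]

/-- On the kernel of `E - Eᴴ`, whose codimension is at most `prank E`, the form of `A = E * C * E`
agrees with that of `E * C * Eᴴ`, which has the same phases as `C`. -/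
lemma phases_le_phases_inv_mul_mul_inv (hA : PositiveImaginary A) (hE : IsSectorial E) {r : ℕ}
    (hr : prank E ≤ r) (hC : PositiveImaginary (E⁻¹ * A * E⁻¹)) {k l : Fin n}
    (hkl : (l : ℕ) = k + r) : phases A l ≤ phases (E⁻¹ * A * E⁻¹) k := by
  set C := E⁻¹ * A * E⁻¹
  obtain ⟨hA_anti, -, -, T, hT⟩ := isCanonicalPhases_iff.1 hA.1.isCanonicalPhases_phases
  obtain ⟨hC_anti, hC_spread, -, S, hS⟩ := isCanonicalPhases_iff.1 hC.1.isCanonicalPhases_phases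
  obtain ⟨-, -, -, R, hR⟩ := isCanonicalPhases_iff.1 hE.isCanonicalPhases_phases
  have hdet : IsUnit E.det := (isUnit_iff_isUnit_det E).1 hR.isUnit
  have hAC : A = E * C * E := by
    calc A = E * E⁻¹ * A * (E⁻¹ * E) := by
          rw [mul_nonsing_inv _ hdet, nonsing_inv_mul _ hdet, Matrix.one_mul, Matrix.mul_one]
      _ = E * C * E := by simp only [C, Matrix.mul_assoc]
  refine hT.le_of_quadForm_eqOn (hS.mul_mul_conjTranspose hR.isUnit) hA_anti hC_anti
    (fun i j => by linarith [(hA.2 i).2, (hC.2 j).1]) hC_spread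
    (V := LinearMap.ker (E - Eᴴ).mulVecLin) (fun x hx => ?_) ?_ hkl
  · exact (congrArg (quadForm · x) hAC).trans (quadForm_mul_mul_eq_of_mem_ker hx)
  · have hrank := LinearMap.finrank_range_add_finrank_ker (E - Eᴴ).mulVecLin
    rw [Module.finrank_fin_fun] at hrank
    have hle := (rank_sub_conjTranspose_le_prank hE).trans hr
    rw [Matrix.rank] at hle
    lia

end PhaseRank

section Truncation

/-- The vector `(0, …, 0, φ_{r+1}, …, φₙ)`. -/
def zeroHead (r : ℕ) (φ : Fin n → ℝ) : Fin n → ℝ :=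
  fun k => if (k : ℕ) < r then 0 else φ k

/-- The vector `(φ₁ / 2, …, φ_r / 2, 0, …, 0)`: the phases of the members of `Sp A r`, where
`φ = phases A`. -/
def halfHead (r : ℕ) (φ : Fin n → ℝ) : Fin n → ℝ :=
  fun k => if (k : ℕ) < r then φ k / 2 else 0

/-- The vector `(φ_{r+1}, …, φₙ, 0, …, 0)`: the nonincreasing rearrangement of `zeroHead r φ` when
`φ` is nonincreasing and nonnegative. -/
def shiftLeft (r : ℕ) (φ : Fin n → ℝ) : Fin n → ℝ :=
  fun k => if h : (k : ℕ) + r < n then φ ⟨k + r, h⟩ else 0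

variable {φ : Fin n → ℝ} {c : ℝ}

lemma exists_perm_zeroHead_comp_eq_shiftLeft (r : ℕ) (φ : Fin n → ℝ) :
    ∃ σ : Equiv.Perm (Fin n), zeroHead r φ ∘ σ = shiftLeft r φ := by
  obtain _ | n := n
  · exact ⟨1, Subsingleton.elim _ _⟩
  refine ⟨Equiv.addRight (Fin.ofNat (n + 1) r), funext fun k => ?_⟩
  have hval : ((k + Fin.ofNat (n + 1) r : Fin (n + 1)) : ℕ) = (k + r) % (n + 1) := by
    simp [Fin.val_add]
  rw [Function.comp_apply, Equiv.coe_addRight, zeroHead, shiftLeft]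
  by_cases h : (k : ℕ) + r < n + 1
  · rw [Nat.mod_eq_of_lt h] at hval
    rw [dif_pos h, if_neg (by lia)]
    exact congrArg φ (Fin.ext hval)
  · rw [dif_neg h, if_pos]
    obtain hr | hr := lt_or_ge r (n + 1)
    · rw [hval, Nat.mod_eq_sub_mod (not_lt.1 h), Nat.mod_eq_of_lt (by lia)]
      lia
    · exact (Fin.is_lt _).trans_le hr

lemma sub_two_mul_halfHead (r : ℕ) (φ : Fin n → ℝ) (k : Fin n) :
    φ k - 2 * halfHead r φ k = zeroHead r φ k := by
  rw [halfHead, zeroHead]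
  split_ifs <;> ring

lemma halfHead_mem_Ico (hφ : ∀ j, φ j ∈ Set.Ico 0 c) (r : ℕ) (k : Fin n) :
    halfHead r φ k ∈ Set.Ico 0 c := by
  obtain ⟨h0, hc⟩ := hφ k
  rw [halfHead]
  split_ifs <;> constructor <;> linarith

lemma shiftLeft_mem_Ico (hφ : ∀ j, φ j ∈ Set.Ico 0 c) (r : ℕ) (k : Fin n) :
    shiftLeft r φ k ∈ Set.Ico 0 c := by
  rw [shiftLeft]
  split_ifs
  · exact hφ _
  · exact ⟨le_rfl, (hφ k).1.trans_lt (hφ k).2⟩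

lemma antitone_halfHead (hφ : Antitone φ) (hφ0 : 0 ≤ φ) (r : ℕ) : Antitone (halfHead r φ) := by
  intro i j hij
  have hle := hφ hij
  have h0 : 0 ≤ φ i := hφ0 i
  have hij' : (i : ℕ) ≤ j := hij
  rw [halfHead, halfHead]
  split_ifs <;> linarith

lemma antitone_shiftLeft (hφ : Antitone φ) (hφ0 : 0 ≤ φ) (r : ℕ) : Antitone (shiftLeft r φ) := by
  intro i j hij
  rw [shiftLeft, shiftLeft]
  split_ifs
  · exact hφ (Fin.mk_le_mk.2 (by lia))
  · lia
  · exact hφ0 _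
  · exact le_rfl

lemma ncard_halfHead_ne_zero_le (r : ℕ) (φ : Fin n → ℝ) : {k | halfHead r φ k ≠ 0}.ncard ≤ r := by
  have hsub : {k | halfHead r φ k ≠ 0} ⊆ (Finset.univ.filter fun k : Fin n => (k : ℕ) < r) := by
    intro k hk
    by_contra hkr
    exact hk (if_neg (by simpa using hkr))
  refine (Set.ncard_le_ncard hsub (Finset.finite_toSet _)).trans ?_
  rw [Set.ncard_coe_finset, Fin.card_filter_val_lt]
  exact min_le_right _ _

end Truncation

section Attainment

variable {A E T : Matrix (Fin n) (Fin n) ℂ} {φ ε : Fin n → ℝ} {r : ℕ}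

lemma phaseDiag_mul_phaseDiag (φ ψ : Fin n → ℝ) :
    phaseDiag φ * phaseDiag ψ = phaseDiag (φ + ψ) := by
  rw [phaseDiag, phaseDiag, phaseDiag, diagonal_mul_diagonal]
  refine congrArg diagonal (funext fun k => ?_)
  rw [← Complex.exp_add, ← mul_add, Pi.add_apply, Complex.ofReal_add]

lemma phaseDiag_zero : phaseDiag (0 : Fin n → ℝ) = 1 := by
  simp [phaseDiag]

lemma inv_phaseDiag (φ : Fin n → ℝ) : (phaseDiag φ)⁻¹ = phaseDiag (-φ) := by
  refine inv_eq_right_inv ?_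
  rw [phaseDiag_mul_phaseDiag, add_neg_cancel, phaseDiag_zero]

lemma IsSectorialDecomp.inv_mul_mul_inv (hA : IsSectorialDecomp A T φ)
    (hE : IsSectorialDecomp E T ε) :
    IsSectorialDecomp (E⁻¹ * A * E⁻¹) T⁻¹ᴴ (φ - 2 • ε) := by
  have hdet : IsUnit T.det := (isUnit_iff_isUnit_det T).1 hA.1
  have hdet_star : IsUnit Tᴴ.det := (isUnit_iff_isUnit_det Tᴴ).1 hA.1.star
  have hphase : phaseDiag (φ - 2 • ε) = phaseDiag (-ε) * phaseDiag φ * phaseDiag (-ε) := by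
    rw [phaseDiag_mul_phaseDiag, phaseDiag_mul_phaseDiag]
    congr 1
    rw [two_nsmul]
    abel
  refine ⟨(isUnit_nonsing_inv_iff.2 hA.1).star, ?_⟩
  rw [hA.2, hE.2, Matrix.mul_inv_rev, Matrix.mul_inv_rev, inv_phaseDiag, hphase,
    conjTranspose_conjTranspose, conjTranspose_nonsing_inv]
  calc T⁻¹ * (phaseDiag (-ε) * Tᴴ⁻¹) * (Tᴴ * phaseDiag φ * T) * (T⁻¹ * (phaseDiag (-ε) * Tᴴ⁻¹))
      = T⁻¹ * phaseDiag (-ε) * (Tᴴ⁻¹ * Tᴴ) * phaseDiag φ * (T * T⁻¹) * phaseDiag (-ε) * Tᴴ⁻¹ := by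
        simp only [Matrix.mul_assoc]
    _ = T⁻¹ * (phaseDiag (-ε) * phaseDiag φ * phaseDiag (-ε)) * Tᴴ⁻¹ := by
        rw [nonsing_inv_mul _ hdet_star, mul_nonsing_inv _ hdet]
        simp only [Matrix.mul_assoc, Matrix.one_mul]

lemma exists_isSectorialDecomp_of_mem_Sp (hE : E ∈ Sp A r) : ∃ T,
    IsSectorialDecomp A T (phases A) ∧ IsSectorialDecomp E T (halfHead r (phases A)) := by
  obtain ⟨T, hT, rfl⟩ := hE
  refine ⟨T, hT, hT.1, ?_⟩
  congr 2
  refine congrArg diagonal (funext fun k => ?_)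
  rw [halfHead]
  split_ifs <;> simp

lemma isCanonicalPhases_halfHead_of_mem_Sp (hA : PositiveImaginary A) (hE : E ∈ Sp A r) :
    IsCanonicalPhases E (halfHead r (phases A)) := by
  obtain ⟨T, -, hT⟩ := exists_isSectorialDecomp_of_mem_Sp hE
  exact hT.isCanonicalPhases
    (antitone_halfHead hA.1.isCanonicalPhases_phases.1 (fun j => (hA.2 j).1) r)
    (halfHead_mem_Ico hA.2 r)

lemma isCanonicalPhases_shiftLeft_of_mem_Sp (hA : PositiveImaginary A) (hE : E ∈ Sp A r) :
    IsCanonicalPhases (E⁻¹ * A * E⁻¹) (shiftLeft r (phases A)) := by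
  obtain ⟨T, hAT, hET⟩ := exists_isSectorialDecomp_of_mem_Sp hE
  obtain ⟨σ, hσ⟩ := exists_perm_zeroHead_comp_eq_shiftLeft r (phases A)
  have hzero : phases A - 2 • halfHead r (phases A) = zeroHead r (phases A) :=
    funext fun k => by simp [← sub_two_mul_halfHead]
  have hshift := (hAT.inv_mul_mul_inv hET).comp_perm σ
  rw [hzero, hσ] at hshift
  exact hshift.isCanonicalPhases
    (antitone_shiftLeft hA.1.isCanonicalPhases_phases.1 (fun j => (hA.2 j).1) r)
    (shiftLeft_mem_Ico hA.2 r)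

lemma prank_le_of_mem_Sp (hA : PositiveImaginary A) (hE : E ∈ Sp A r) : prank E ≤ r := by
  rw [prank, phases_eq (isCanonicalPhases_halfHead_of_mem_Sp hA hE)]
  exact ncard_halfHead_ne_zero_le r _

end Attainment

namespace IsSymmetricGauge

variable {Φ : (Fin n → ℝ) → ℝ} {x y : Fin n → ℝ}

lemma convexOn (hΦ : IsSymmetricGauge Φ) : ConvexOn ℝ Set.univ Φ := by
  refine ⟨convex_univ, fun x _ y _ a b ha hb _ => ?_⟩
  simpa only [hΦ.smul, abs_of_nonneg ha, abs_of_nonneg hb, smul_eq_mul] using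
    hΦ.subadd (a • x) (b • y)

lemma eq_of_abs_eq (hΦ : IsSymmetricGauge Φ) (h : ∀ i, |x i| = |y i|) : Φ x = Φ y := by
  rw [← hΦ.abs x, ← hΦ.abs y, funext h]

lemma update_le (hΦ : IsSymmetricGauge Φ) {i : Fin n} {t : ℝ} (ht : |t| ≤ |x i|) :
    Φ (Function.update x i t) ≤ Φ x := by
  have hneg : Φ (Function.update x i (-x i)) = Φ x := hΦ.eq_of_abs_eq fun j => by
    obtain rfl | hj := eq_or_ne j i <;> simp [*]
  have ht_mem : t ∈ segment ℝ (-x i) (x i) := by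
    rw [segment_eq_uIcc, Set.mem_uIcc]
    obtain h0 | h0 := le_total 0 (x i)
    · rw [abs_of_nonneg h0, abs_le] at ht
      exact Or.inl ht
    · rw [abs_of_nonpos h0, abs_le, neg_neg] at ht
      exact Or.inr ht
  have hmem : Function.update x i t ∈ segment ℝ (Function.update x i (-x i)) x := by
    have := Set.mem_image_of_mem (Function.update x i) ht_mem
    rwa [Pi.image_update_segment, Function.update_eq_self] at this
  simpa [hneg] using hΦ.convexOn.le_on_segment trivial trivial hmem

lemma le_of_abs_le (hΦ : IsSymmetricGauge Φ) (h : ∀ i, |x i| ≤ |y i|) : Φ x ≤ Φ y := by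
  have hpiecewise (s : Finset (Fin n)) : Φ (s.piecewise x y) ≤ Φ y := by
    induction s using Finset.induction_on with
    | empty => rw [Finset.piecewise_empty]
    | insert a s ha ih =>
      rw [Finset.piecewise_insert]
      refine (hΦ.update_le ?_).trans ih
      rw [Finset.piecewise_eq_of_notMem _ _ _ ha]
      exact h a
  simpa only [Finset.piecewise_univ] using hpiecewise Finset.univ

lemma monotoneOn (hΦ : IsSymmetricGauge Φ) : MonotoneOn Φ (Set.Ici 0) := by
  intro x hx y hy hxy
  refine hΦ.le_of_abs_le fun i => ?_
  rw [abs_of_nonneg (hx i), abs_of_nonneg (hy i)]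
  exact hxy i

end IsSymmetricGauge

lemma shiftLeft_phases_le {A E : Matrix (Fin n) (Fin n) ℂ} {r : ℕ} (hA : PositiveImaginary A)
    (hE : IsSectorial E) (hr : prank E ≤ r) (hC : PositiveImaginary (E⁻¹ * A * E⁻¹)) :
    shiftLeft r (phases A) ≤ phases (E⁻¹ * A * E⁻¹) := by
  intro k
  rw [shiftLeft]
  split_ifs with h
  · exact phases_le_phases_inv_mul_mul_inv hA hE hr hC rfl
  · exact (hC.2 k).1

theorem low_prank_approximation_general {β : Type*} [Preorder β] (Φ : (Fin n → ℝ) → β)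
    (hΦ_mono : MonotoneOn Φ (Set.Ici 0))
    (hΦ_perm : ∀ (σ : Equiv.Perm (Fin n)) (x), Φ (x ∘ σ) = Φ x)
    (A : Matrix (Fin n) (Fin n) ℂ) (hA : PositiveImaginary A) (r : ℕ) :
    IsLeast {v : β | ∃ E : Matrix (Fin n) (Fin n) ℂ, IsSectorial E ∧ prank E ≤ r ∧
        PositiveImaginary (E⁻¹ * A * E⁻¹) ∧ v = Φ (phases (E⁻¹ * A * E⁻¹))}
      (Φ fun k => if (k : ℕ) < r then 0 else phases A k) ∧
    ∀ E ∈ Sp A r, IsSectorial E ∧ prank E ≤ r ∧ PositiveImaginary (E⁻¹ * A * E⁻¹) ∧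
      Φ (phases (E⁻¹ * A * E⁻¹)) = Φ fun k => if (k : ℕ) < r then 0 else phases A k := by
  have hshift : Φ (shiftLeft r (phases A)) = Φ (zeroHead r (phases A)) := by
    obtain ⟨σ, hσ⟩ := exists_perm_zeroHead_comp_eq_shiftLeft r (phases A)
    rw [← hσ, hΦ_perm]
  have hattained : ∀ E ∈ Sp A r, IsSectorial E ∧ prank E ≤ r ∧
      PositiveImaginary (E⁻¹ * A * E⁻¹) ∧
      Φ (phases (E⁻¹ * A * E⁻¹)) = Φ (zeroHead r (phases A)) := fun E hE => by
    have hC := isCanonicalPhases_shiftLeft_of_mem_Sp hA hE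
    exact ⟨(isCanonicalPhases_halfHead_of_mem_Sp hA hE).isSectorial, prank_le_of_mem_Sp hA hE,
      hC.positiveImaginary (shiftLeft_mem_Ico hA.2 r), by rw [phases_eq hC, hshift]⟩
  refine ⟨⟨?_, ?_⟩, hattained⟩
  · obtain ⟨-, -, -, -, T, hT⟩ := hA.1.isCanonicalPhases_phases
    obtain ⟨hE, hr, hC, hval⟩ := hattained _ ⟨T, hT, rfl⟩
    exact ⟨_, hE, hr, hC, hval.symm⟩
  · rintro _ ⟨E, hE, hr, hC, rfl⟩
    calc Φ (zeroHead r (phases A)) = Φ (shiftLeft r (phases A)) := hshift.symm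
      _ ≤ Φ (phases (E⁻¹ * A * E⁻¹)) :=
        hΦ_mono (fun k => (shiftLeft_mem_Ico hA.2 r k).1) (fun k => (hC.2 k).1)
          (shiftLeft_phases_le hA hE hr hC)

/-- low phase-rank approximation (Schmidt-Mirsky counterpart),
positive-imaginary case. -/
theorem low_prank_approximation
    (hn : 1 ≤ n) (Φ : (Fin n → ℝ) → ℝ) (hΦ : IsSymmetricGauge Φ)
    (A : Matrix (Fin n) (Fin n) ℂ) (hA : PositiveImaginary A)
    (r : ℕ) (hr : r ≤ n) :
    IsLeast {v : ℝ | ∃ E : Matrix (Fin n) (Fin n) ℂ, IsSectorial E ∧ prank E ≤ r ∧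
        PositiveImaginary (E⁻¹ * A * E⁻¹) ∧ v = Φ (phases (E⁻¹ * A * E⁻¹))}
      (Φ fun k => if (k : ℕ) < r then 0 else phases A k) ∧
    ∀ E ∈ Sp A r, IsSectorial E ∧ prank E ≤ r ∧ PositiveImaginary (E⁻¹ * A * E⁻¹) ∧
      Φ (phases (E⁻¹ * A * E⁻¹)) = Φ fun k => if (k : ℕ) < r then 0 else phases A k :=
  low_prank_approximation_general Φ hΦ.monotoneOn hΦ.perm A hA r

end LowPrank
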